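/- Let H > 0 and M ∈ ℂ. For every t > 0 and r ≥ 0 with H·r < 1 − e^{−Ht}, the kernel K₀ satisfies K₀(r,t;M) = [4^{−M/H}·e^{Mt}·((e^{−Ht}+1)² − H²r²)^{M/H − 1/2} / ((1 − e^{−Ht})² − H²r²)] · [ (H e^{−Ht} − H + M e^{−2Ht} − M − H²M r²)·₂F₁(1/2 − M/H, 1/2 − M/H; 1; ζ) + (H/2 + M)·(H²r² − e^{−2Ht} + 1)·₂F₁(−1/2 − M/H, 1/2 − M/H; 1; ζ) ], where ζ := ((e^{−Ht} − 1)² − H²r²)/((e^{−Ht} + 1)² − H²r²) ∈ [0,1). -/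

import Mathlib

/-!
The Gauss contiguity relation `z (1 - z) F' = (c - a) F(a - 1) + (a - c + b z) F`, read off from
the coefficients of the power series, eliminates the derivative of the hypergeometric function.
Write `D` and `N` for `(e^{-Hb} ± e^{-Ht})² - H²r²`, so that `ζ = N / D`. With
`S = e^{-2Hb} - e^{-2Ht} + H²r²` both satisfy `∂X/∂b = -H (S + X)`, hence
`∂ζ/∂b = -H (S / N) ζ (1 - ζ)`, whose factor `ζ (1 - ζ)` cancels against the one in the contiguity
relation. With `F` and `G` the hypergeometric functions of first parameter `1/2 - M/H` and
`-1/2 - M/H`, the product rule then gives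
`∂E/∂b = 4^{-M/H} e^{M(b+t)} D^{M/H-1/2} (H/2 F + (H/2 + M) (S/N) (F - G))`,
and the formula for `K₀` is the case `b = 0`.
-/

/-- The Gauss hypergeometric function `₂F₁(a,b;c;z) = ∑ (a)ₙ(b)ₙ/((c)ₙ n!) zⁿ`. -/
noncomputable def hyp (a b c z : ℂ) : ℂ :=
  ∑' n : ℕ, ((ascPochhammer ℂ n).eval a * (ascPochhammer ℂ n).eval b /
    ((ascPochhammer ℂ n).eval c * (n.factorial : ℂ))) * z ^ n

/-- The kernel `E(r,t;0,b;M)` of the integral transform for the Klein–Gordon equation in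
de Sitter space-time. -/
noncomputable def Eker (H : ℝ) (M : ℂ) (r t b : ℝ) : ℂ :=
  (4 : ℂ) ^ (-(M / (H : ℂ))) * Complex.exp (M * ((b : ℂ) + (t : ℂ))) *
    ((((Real.exp (-(H * b)) + Real.exp (-(H * t))) ^ 2 - H ^ 2 * r ^ 2 : ℝ)) : ℂ) ^
      (M / (H : ℂ) - 1 / 2) *
    hyp (1 / 2 - M / (H : ℂ)) (1 / 2 - M / (H : ℂ)) 1
      ((((Real.exp (-(H * b)) - Real.exp (-(H * t))) ^ 2 - H ^ 2 * r ^ 2) /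
        ((Real.exp (-(H * b)) + Real.exp (-(H * t))) ^ 2 - H ^ 2 * r ^ 2) : ℝ) : ℂ)

/-- The kernel `K₁(r,t;M) = E(r,t;0,0;M)`. -/
noncomputable def K1 (H : ℝ) (M : ℂ) (r t : ℝ) : ℂ := Eker H M r t 0

/-- The kernel `K₀(r,t;M) = −∂_b E(r,t;0,b;M)|_{b=0}`. -/
noncomputable def K0 (H : ℝ) (M : ℂ) (r t : ℝ) : ℂ := -deriv (fun b => Eker H M r t b) 0

section PowerSeries

variable {𝕜 E F : Type*} [NontriviallyNormedField 𝕜] [NormedAddCommGroup E] [NormedSpace 𝕜 E]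
  [NormedAddCommGroup F] [NormedSpace 𝕜 F] [CompleteSpace F]

lemma hasSum_nsmul_apply_diag (p : FormalMultilinearSeries 𝕜 E F) {x : E}
    (hx : ‖x‖ₑ < p.radius) :
    HasSum (fun n : ℕ => n • p n fun _ => x) (fderiv 𝕜 p.sum x x) := by
  have hderiv : HasSum (fun n => p.derivSeries n fun _ => x) (fderiv 𝕜 p.sum x) := by
    rw [FormalMultilinearSeries.fderiv_sum hx]
    exact p.derivSeries.hasSum (by simpa using hx.trans_le p.radius_le_radius_derivSeries)
  rw [← hasSum_nat_add_iff' 1]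
  simpa [FormalMultilinearSeries.derivSeries_apply_diag] using
    (ContinuousLinearMap.apply 𝕜 F x).hasSum hderiv

end PowerSeries

section Hypergeometric

variable {𝕂 : Type*} [RCLike 𝕂]

lemma one_le_radius_ordinaryHypergeometricSeries (a b c : 𝕂) :
    1 ≤ (ordinaryHypergeometricSeries 𝕂 a b c).radius := by
  by_cases! h : ∀ k : ℕ, (k : 𝕂) ≠ -a ∧ (k : 𝕂) ≠ -b ∧ (k : 𝕂) ≠ -c
  · exact (ordinaryHypergeometricSeries_radius_eq_one 𝕂 a b c h).ge
  · obtain ⟨k, hk⟩ := h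
    have hzero (n : ℕ) : ordinaryHypergeometricSeries 𝕂 a b c (n + (k + 1)) = 0 :=
      ordinaryHypergeometricSeries_eq_zero_of_neg_nat a b c (k := k) (by tauto) (by lia)
    simp [FormalMultilinearSeries.radius_eq_top_of_forall_image_add_eq_zero _ _ hzero]

lemma enorm_lt_radius_ordinaryHypergeometricSeries (a b c : 𝕂) {z : 𝕂} (hz : ‖z‖ < 1) :
    ‖z‖ₑ < (ordinaryHypergeometricSeries 𝕂 a b c).radius := by
  refine lt_of_lt_of_le ?_ (one_le_radius_ordinaryHypergeometricSeries a b c)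
  rwa [← ofReal_norm, ENNReal.ofReal_lt_one]

lemma differentiableAt_ordinaryHypergeometric (a b c : 𝕂) {z : 𝕂} (hz : ‖z‖ < 1) :
    DifferentiableAt 𝕂 (₂F₁ a b c) z :=
  (FormalMultilinearSeries.hasFDerivAt_sum
    (enorm_lt_radius_ordinaryHypergeometricSeries a b c hz)).differentiableAt

lemma hasSum_ordinaryHypergeometric (a b c : 𝕂) {z : 𝕂} (hz : ‖z‖ < 1) :
    HasSum (fun n : ℕ => ordinaryHypergeometricCoefficient a b c n * z ^ n) (₂F₁ a b c z) := by
  have := (ordinaryHypergeometricSeries 𝕂 a b c).hasSum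
    (Metric.mem_eball.2 <| (edist_zero_right z).trans_lt <|
      enorm_lt_radius_ordinaryHypergeometricSeries a b c hz)
  simpa only [ordinaryHypergeometricSeries_apply_eq'] using! this

lemma hasSum_natCast_mul_ordinaryHypergeometric (a b c : 𝕂) {z : 𝕂} (hz : ‖z‖ < 1) :
    HasSum (fun n : ℕ => n * (ordinaryHypergeometricCoefficient a b c n * z ^ n))
      (z * deriv (₂F₁ a b c) z) := by
  have := hasSum_nsmul_apply_diag _ (enorm_lt_radius_ordinaryHypergeometricSeries a b c hz)
  rw [fderiv_eq_smul_deriv, smul_eq_mul] at this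
  simp only [ordinaryHypergeometricSeries_apply_eq, nsmul_eq_mul] at this
  exact this

lemma ordinaryHypergeometricCoefficient_zero (a b c : 𝕂) :
    ordinaryHypergeometricCoefficient a b c 0 = 1 := by
  simp [ordinaryHypergeometricCoefficient]

lemma ordinaryHypergeometricCoefficient_succ (a b c : 𝕂) (n : ℕ) :
    ordinaryHypergeometricCoefficient a b c (n + 1) =
      (a + n) * (b + n) / ((n + 1) * (c + n)) * ordinaryHypergeometricCoefficient a b c n := by
  simp only [ordinaryHypergeometricCoefficient, ascPochhammer_succ_eval, Nat.factorial_succ]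
  push_cast
  field_simp

lemma ordinaryHypergeometricCoefficient_sub_one_succ (a b c : 𝕂) (n : ℕ) :
    ordinaryHypergeometricCoefficient (a - 1) b c (n + 1) =
      (a - 1) * (b + n) / ((n + 1) * (c + n)) * ordinaryHypergeometricCoefficient a b c n := by
  have hshift : (ascPochhammer 𝕂 (n + 1)).eval (a - 1) =
      (a - 1) * (ascPochhammer 𝕂 n).eval a := by
    simp [ascPochhammer_succ_left, Polynomial.eval_comp]
  simp only [ordinaryHypergeometricCoefficient, hshift, ascPochhammer_succ_eval,
    Nat.factorial_succ]
  push_cast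
  field_simp

lemma mul_deriv_ordinaryHypergeometric (a b : 𝕂) {c : 𝕂} (hc : ∀ k : ℕ, c ≠ -k) {z : 𝕂}
    (hz : ‖z‖ < 1) :
    z * (1 - z) * deriv (₂F₁ a b c) z =
      (c - a) * ₂F₁ (a - 1) b c z + (a - c + b * z) * ₂F₁ a b c z := by
  have hF := hasSum_ordinaryHypergeometric a b c hz
  have hF' := hasSum_natCast_mul_ordinaryHypergeometric a b c hz
  have hG := hasSum_ordinaryHypergeometric (a - 1) b c hz
  -- With `θ = z d/dz` the claim reads `θF - (c - a) G - (a - c) F = z (θF + b F)`.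
  have hunshifted := (hF'.sub (hG.mul_left (c - a))).sub (hF.mul_left (a - c))
  have hshifted := (hF'.add (hF.mul_left b)).mul_left z
  rw [← hasSum_nat_add_iff' 1] at hunshifted
  have hcoeff := hunshifted.unique (hshifted.congr_fun fun n => ?_)
  · simp only [Finset.sum_range_one, ordinaryHypergeometricCoefficient_zero, Nat.cast_zero,
      pow_zero] at hcoeff
    linear_combination hcoeff
  · have hcn : c + n ≠ 0 := fun h => hc n (eq_neg_of_add_eq_zero_left h)
    rw [ordinaryHypergeometricCoefficient_succ, ordinaryHypergeometricCoefficient_sub_one_succ]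
    generalize ordinaryHypergeometricCoefficient a b c n = u
    push_cast
    field_simp
    ring

lemma hasDerivAt_ordinaryHypergeometric (a b : 𝕂) {c : 𝕂} (hc : ∀ k : ℕ, c ≠ -k) {z : 𝕂}
    (hz₀ : z ≠ 0) (hz : ‖z‖ < 1) :
    HasDerivAt (₂F₁ a b c)
      (((c - a) * ₂F₁ (a - 1) b c z + (a - c + b * z) * ₂F₁ a b c z) / (z * (1 - z))) z := by
  have hz₁ : 1 - z ≠ 0 := sub_ne_zero.2 fun h => by simp [← h] at hz
  rw [← mul_deriv_ordinaryHypergeometric a b hc hz, mul_div_cancel_left₀ _ (mul_ne_zero hz₀ hz₁)]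
  exact (differentiableAt_ordinaryHypergeometric a b c hz).hasDerivAt

end Hypergeometric

lemma hyp_eq_ordinaryHypergeometric (a b c z : ℂ) : hyp a b c z = ₂F₁ a b c z := by
  rw [ordinaryHypergeometric_eq_tsum]
  refine tsum_congr fun n => ?_
  rw [smul_eq_mul]
  ring

lemma hasDerivAt_ofReal_cpow_of_pos {f : ℝ → ℝ} {f' x : ℝ} (hf : HasDerivAt f f' x)
    (hpos : 0 < f x) (p : ℂ) :
    HasDerivAt (fun s => (f s : ℂ) ^ p) ((f x : ℂ) ^ p * (p * f' / f x)) x := by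
  have hpow := (Complex.hasStrictDerivAt_cpow_const (c := p)
    (Complex.ofReal_mem_slitPlane.2 hpos)).hasDerivAt
  refine (HasDerivAt.comp (h₂ := fun w : ℂ => w ^ p) x hpow hf.ofReal_comp).congr_deriv ?_
  rw [Complex.cpow_sub _ _ (Complex.ofReal_ne_zero.2 hpos.ne'), Complex.cpow_one]
  ring

section Kernel

/-- The base `(e^{-Hb} + e^{-Ht})² - H²r²` of the power in `E(r,t;0,b;M)`. -/
noncomputable def coneSum (H r t b : ℝ) : ℝ :=
  (Real.exp (-(H * b)) + Real.exp (-(H * t))) ^ 2 - H ^ 2 * r ^ 2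

/-- The quantity `(e^{-Hb} - e^{-Ht})² - H²r²`, which vanishes exactly on the light cone. -/
noncomputable def coneDiff (H r t b : ℝ) : ℝ :=
  (Real.exp (-(H * b)) - Real.exp (-(H * t))) ^ 2 - H ^ 2 * r ^ 2

/-- The argument `ζ` of the hypergeometric function in `E(r,t;0,b;M)`. -/
noncomputable def coneRatio (H r t b : ℝ) : ℝ :=
  coneDiff H r t b / coneSum H r t b

/-- The quantity `S = e^{-2Hb} - e^{-2Ht} + H²r²`, chosen so that both `X = coneSum` and
`X = coneDiff` satisfy `∂X/∂b = -H (S + X)`. -/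
noncomputable def coneSlope (H r t b : ℝ) : ℝ :=
  Real.exp (-(H * b)) ^ 2 - Real.exp (-(H * t)) ^ 2 + H ^ 2 * r ^ 2

variable {H r t b : ℝ}

lemma Eker_eq_ordinaryHypergeometric (H : ℝ) (M : ℂ) (r t b : ℝ) :
    Eker H M r t b = (4 : ℂ) ^ (-(M / H)) * Complex.exp (M * (b + t)) *
      (coneSum H r t b : ℂ) ^ (M / H - 1 / 2) *
      ₂F₁ (1 / 2 - M / H) (1 / 2 - M / H) 1 (coneRatio H r t b : ℂ) := by
  rw [← hyp_eq_ordinaryHypergeometric]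
  rfl

lemma abs_coneDiff_lt_coneSum
    (h : H ^ 2 * r ^ 2 < Real.exp (-(H * b)) ^ 2 + Real.exp (-(H * t)) ^ 2) :
    |coneDiff H r t b| < coneSum H r t b := by
  have hxy := mul_pos (Real.exp_pos (-(H * b))) (Real.exp_pos (-(H * t)))
  rw [coneDiff, coneSum, abs_lt]
  constructor <;> nlinarith

lemma hasDerivAt_exp_neg_mul (H b : ℝ) :
    HasDerivAt (fun s => Real.exp (-(H * s))) (-(H * Real.exp (-(H * b)))) b := by
  simpa [mul_comm] using ((hasDerivAt_id b).const_mul H).neg.exp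

lemma hasDerivAt_coneSum (H r t b : ℝ) :
    HasDerivAt (coneSum H r t) (-(H * (coneSlope H r t b + coneSum H r t b))) b := by
  refine ((((hasDerivAt_exp_neg_mul H b).add_const _).pow 2).sub_const _).congr_deriv ?_
  rw [coneSlope, coneSum]
  ring

lemma hasDerivAt_coneDiff (H r t b : ℝ) :
    HasDerivAt (coneDiff H r t) (-(H * (coneSlope H r t b + coneDiff H r t b))) b := by
  refine ((((hasDerivAt_exp_neg_mul H b).sub_const _).pow 2).sub_const _).congr_deriv ?_
  rw [coneSlope, coneDiff]
  ring

lemma hasDerivAt_coneRatio (hD : coneSum H r t b ≠ 0) (hN : coneDiff H r t b ≠ 0) :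
    HasDerivAt (coneRatio H r t)
      (-(H * (coneSlope H r t b / coneDiff H r t b)) *
        (coneRatio H r t b * (1 - coneRatio H r t b))) b := by
  refine ((hasDerivAt_coneDiff H r t b).div (hasDerivAt_coneSum H r t b) hD).congr_deriv ?_
  rw [coneRatio]
  field_simp
  ring

lemma hasDerivAt_ordinaryHypergeometric_coneRatio (α β : ℂ) {γ : ℂ} (hγ : ∀ k : ℕ, γ ≠ -k)
    (hN : coneDiff H r t b ≠ 0) (hND : |coneDiff H r t b| < coneSum H r t b) :
    HasDerivAt (fun s => ₂F₁ α β γ (coneRatio H r t s : ℂ))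
      (-(H * (coneSlope H r t b / coneDiff H r t b)) *
        ((γ - α) * ₂F₁ (α - 1) β γ (coneRatio H r t b : ℂ) +
          (α - γ + β * coneRatio H r t b) * ₂F₁ α β γ (coneRatio H r t b : ℂ))) b := by
  have hD : 0 < coneSum H r t b := (abs_nonneg _).trans_lt hND
  have hζ₀ : (coneRatio H r t b : ℂ) ≠ 0 := Complex.ofReal_ne_zero.2 (div_ne_zero hN hD.ne')
  have hζ : ‖(coneRatio H r t b : ℂ)‖ < 1 := by
    rwa [Complex.norm_real, Real.norm_eq_abs, coneRatio, abs_div, abs_of_pos hD, div_lt_one hD]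
  have hζ₁ : 1 - (coneRatio H r t b : ℂ) ≠ 0 := sub_ne_zero.2 fun h => by simp [← h] at hζ
  refine ((hasDerivAt_ordinaryHypergeometric α β hγ hζ₀ hζ).comp b
    (hasDerivAt_coneRatio hD.ne' hN).ofReal_comp).congr_deriv ?_
  push_cast
  field_simp

lemma hasDerivAt_Eker (hH : H ≠ 0) (M : ℂ) (hN : coneDiff H r t b ≠ 0)
    (hND : |coneDiff H r t b| < coneSum H r t b) :
    HasDerivAt (Eker H M r t)
      ((4 : ℂ) ^ (-(M / H)) * Complex.exp (M * (b + t)) *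
          (coneSum H r t b : ℂ) ^ (M / H - 1 / 2) *
        (H / 2 * ₂F₁ (1 / 2 - M / H) (1 / 2 - M / H) 1 (coneRatio H r t b : ℂ) +
          (H / 2 + M) * (coneSlope H r t b / coneDiff H r t b) *
            (₂F₁ (1 / 2 - M / H) (1 / 2 - M / H) 1 (coneRatio H r t b : ℂ) -
              ₂F₁ (-(1 / 2) - M / H) (1 / 2 - M / H) 1 (coneRatio H r t b : ℂ)))) b := by
  have hD : 0 < coneSum H r t b := (abs_nonneg _).trans_lt hND
  have hDC : (coneSum H r t b : ℂ) ≠ 0 := Complex.ofReal_ne_zero.2 hD.ne'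
  have hNC : (coneDiff H r t b : ℂ) ≠ 0 := Complex.ofReal_ne_zero.2 hN
  have hHC : (H : ℂ) ≠ 0 := Complex.ofReal_ne_zero.2 hH
  have hexp : HasDerivAt (fun s : ℝ => Complex.exp (M * (s + t)))
      (Complex.exp (M * (b + t)) * M) b := by
    simpa using (((hasDerivAt_id b).ofReal_comp.add_const (t : ℂ)).const_mul M).cexp
  have hpow := hasDerivAt_ofReal_cpow_of_pos (hasDerivAt_coneSum H r t b) hD (M / H - 1 / 2)
  have hF := hasDerivAt_ordinaryHypergeometric_coneRatio (1 / 2 - M / H) (1 / 2 - M / H)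
    (γ := 1) (fun k h => Nat.cast_add_one_ne_zero k (by linear_combination h)) hN hND
  have hα : 1 / 2 - M / H - 1 = -(1 / 2) - M / H := by ring
  rw [hα] at hF
  rw [funext (Eker_eq_ordinaryHypergeometric H M r t)]
  refine (((hexp.const_mul _).mul hpow).mul hF).congr_deriv ?_
  simp only [Pi.mul_apply]
  generalize ₂F₁ (1 / 2 - M / H) (1 / 2 - M / H) 1 (coneRatio H r t b : ℂ) = F
  generalize ₂F₁ (-(1 / 2) - M / H) (1 / 2 - M / H) 1 (coneRatio H r t b : ℂ) = G
  rw [coneRatio]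
  push_cast
  field_simp
  ring

end Kernel

theorem K0_second_form_general (H : ℝ) (hH : H ≠ 0) (M : ℂ) (t r : ℝ)
    (hcone : (1 - Real.exp (-(H * t))) ^ 2 - H ^ 2 * r ^ 2 ≠ 0)
    (hconv : H ^ 2 * r ^ 2 < 1 + Real.exp (-(H * t)) ^ 2) :
    K0 H M r t =
      (4 : ℂ) ^ (-(M / (H : ℂ))) * Complex.exp (M * (t : ℂ)) *
          (((Real.exp (-(H * t)) + 1) ^ 2 - H ^ 2 * r ^ 2 : ℝ) : ℂ) ^ (M / (H : ℂ) - 1 / 2) /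
          (((1 - Real.exp (-(H * t))) ^ 2 - H ^ 2 * r ^ 2 : ℝ) : ℂ) *
        (((H : ℂ) * ((Real.exp (-(H * t)) : ℝ) : ℂ) - (H : ℂ) +
              M * ((Real.exp (-(2 * H * t)) : ℝ) : ℂ) - M - (H : ℂ) ^ 2 * M * (r : ℂ) ^ 2) *
            hyp (1 / 2 - M / (H : ℂ)) (1 / 2 - M / (H : ℂ)) 1
              ((((Real.exp (-(H * t)) - 1) ^ 2 - H ^ 2 * r ^ 2) /
                ((Real.exp (-(H * t)) + 1) ^ 2 - H ^ 2 * r ^ 2) : ℝ) : ℂ) +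
          ((H : ℂ) / 2 + M) *
              ((H : ℂ) ^ 2 * (r : ℂ) ^ 2 - ((Real.exp (-(2 * H * t)) : ℝ) : ℂ) + 1) *
            hyp (-(1 / 2) - M / (H : ℂ)) (1 / 2 - M / (H : ℂ)) 1
              ((((Real.exp (-(H * t)) - 1) ^ 2 - H ^ 2 * r ^ 2) /
                ((Real.exp (-(H * t)) + 1) ^ 2 - H ^ 2 * r ^ 2) : ℝ) : ℂ)) := by
  have hzero : Real.exp (-(H * 0)) = 1 := by simp
  have hN : coneDiff H r t 0 = (1 - Real.exp (-(H * t))) ^ 2 - H ^ 2 * r ^ 2 := by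
    rw [coneDiff, hzero]
  have hderiv := hasDerivAt_Eker hH M (hN ▸ hcone)
    (abs_coneDiff_lt_coneSum (by rwa [hzero, one_pow]))
  have hsq : Real.exp (-(2 * H * t)) = Real.exp (-(H * t)) ^ 2 := by
    rw [← Real.exp_nat_mul]
    ring_nf
  rw [K0, hderiv.deriv]
  simp only [hyp_eq_ordinaryHypergeometric, coneRatio]
  rw [hN, coneSum, coneSlope, hzero, hsq, sub_sq_comm _ (1 : ℝ), add_comm _ (1 : ℝ)]
  generalize (₂F₁ (1 / 2 - M / H) _ _ _ : ℂ) = F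
  generalize (₂F₁ (-(1 / 2) - M / H) _ _ _ : ℂ) = G
  have hcone' := Complex.ofReal_ne_zero.2 hcone
  push_cast at hcone' ⊢
  rw [zero_add]
  field_simp
  ring

/-- the second equivalent form of the kernel `K₀` (Lemma 8.1 of the paper). -/
theorem K0_second_form (H : ℝ) (hH : 0 < H) (M : ℂ) (t : ℝ) (ht : 0 < t)
    (r : ℝ) (hr : 0 ≤ r) (h : H * r < 1 - Real.exp (-(H * t))) :
    K0 H M r t =
      (4 : ℂ) ^ (-(M / (H : ℂ))) * Complex.exp (M * (t : ℂ)) *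
          (((Real.exp (-(H * t)) + 1) ^ 2 - H ^ 2 * r ^ 2 : ℝ) : ℂ) ^ (M / (H : ℂ) - 1 / 2) /
          (((1 - Real.exp (-(H * t))) ^ 2 - H ^ 2 * r ^ 2 : ℝ) : ℂ) *
        (((H : ℂ) * ((Real.exp (-(H * t)) : ℝ) : ℂ) - (H : ℂ) +
              M * ((Real.exp (-(2 * H * t)) : ℝ) : ℂ) - M - (H : ℂ) ^ 2 * M * (r : ℂ) ^ 2) *
            hyp (1 / 2 - M / (H : ℂ)) (1 / 2 - M / (H : ℂ)) 1
              ((((Real.exp (-(H * t)) - 1) ^ 2 - H ^ 2 * r ^ 2) /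
                ((Real.exp (-(H * t)) + 1) ^ 2 - H ^ 2 * r ^ 2) : ℝ) : ℂ) +
          ((H : ℂ) / 2 + M) *
              ((H : ℂ) ^ 2 * (r : ℂ) ^ 2 - ((Real.exp (-(2 * H * t)) : ℝ) : ℂ) + 1) *
            hyp (-(1 / 2) - M / (H : ℂ)) (1 / 2 - M / (H : ℂ)) 1
              ((((Real.exp (-(H * t)) - 1) ^ 2 - H ^ 2 * r ^ 2) /
                ((Real.exp (-(H * t)) + 1) ^ 2 - H ^ 2 * r ^ 2) : ℝ) : ℂ)) := by
  have hlt : H ^ 2 * r ^ 2 < (1 - Real.exp (-(H * t))) ^ 2 := by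
    rw [← mul_pow]
    exact pow_lt_pow_left₀ h (mul_nonneg hH.le hr) two_ne_zero
  exact K0_second_form_general H hH.ne' M t r (sub_pos.2 hlt).ne'
    (hlt.trans (by nlinarith [Real.exp_pos (-(H * t))]))
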